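/- Let r and n be integers with r ≥ 3 and n ≥ r+1, and let G be a K_{r+1}-saturated simple graph on n vertices such that the sum over all vertices v of d(v)² equals (n-1)²(r-1) + (r-1)²(n-r+1), where d(v) denotes the degree of v. Then G is isomorphic to S_{n,r}. -/

import Mathlib

open SimpleGraph

/-- A graph `G` is `K_r`-saturated if it contains no `r`-clique, but adding any edge
between distinct non-adjacent vertices creates an `r`-clique. -/
def IsKSaturated {V : Type*} (r : ℕ) (G : SimpleGraph V) : Prop :=
  G.CliqueFree r ∧ ∀ u v : V, u ≠ v → ¬ G.Adj u v →
    ¬ (G ⊔ SimpleGraph.fromEdgeSet {s(u, v)}).CliqueFree r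

/-- The graph `S_{n,r}`: a complete graph on the `r-1` vertices `{0, …, r-2}` of `Fin n`,
together with `n-r+1` further vertices each adjacent exactly to those `r-1` vertices;
i.e. two distinct vertices are adjacent iff at least one of them lies in `{0, …, r-2}`. -/
def Snr (n r : ℕ) : SimpleGraph (Fin n) :=
  SimpleGraph.fromRel (fun u v => (u : ℕ) < r - 1 ∨ (v : ℕ) < r - 1)

/-!
Deleting the `u` universal vertices of a `K_{r+1}`-saturated graph leaves a `K_{k+2}`-saturated
graph `H` with `k + u = r - 1` and no universal vertex. If `k = 0` then `H` has no edges and the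
graph is `S_{n,r}`, so suppose `k ≥ 1`.

Every vertex `v` of `H` has a `k`-clique `C` in its neighbourhood, and Hall's theorem matches each
`c ∈ C` with a neighbour `f c` of `v` not adjacent to `c`. Hence `H` has minimum degree at least
`2k`. Moreover any clique misses a vertex of each pair `{c, f c}`; double counting the walks
`v, w, x` with this in mind gives `∑_{w ∼ v} d(w) ≥ k(m - 1) + k(k - 1)`, where `m = |H|`. Summing
over `v` bounds the sum of squared degrees of `H`, and after restoring the universal vertices the
sum exceeds that of `S_{n,r}` by at least `k(k² + 2ku + 2u - 1)`, which is positive if `r ≥ 3`.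
-/

section

open Finset

variable {V : Type*} {G : SimpleGraph V} {k : ℕ}

theorem card_lt_of_isClique_of_cliqueFree {s : Finset V} (hG : G.CliqueFree k)
    (hs : G.IsClique s) : #s < k := by
  by_contra! h
  obtain ⟨t, hts, ht⟩ := exists_subset_card_eq h
  exact hG t ⟨hs.subset (coe_subset.2 hts), ht⟩

/-- Exchanging the vertices of `T` that are not adjacent to all of `A \ T` for `A \ T` yields a
clique, which cannot be larger than `T`. -/
theorem card_sdiff_le_card_filter_compl_adj [DecidableEq V] [DecidableRel G.Adj]
    {A T : Finset V} (hG : G.CliqueFree (k + 1)) (hA : G.IsClique A) (hT : G.IsNClique k T) :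
    #(A \ T) ≤ #{w ∈ T | ∃ x ∈ A \ T, Gᶜ.Adj x w} := by
  set R := {w ∈ T | ∃ x ∈ A \ T, Gᶜ.Adj x w} with hR
  have adj_of_mem : ∀ p ∈ T \ R, ∀ q ∈ A \ T, G.Adj p q := by
    intro p hp q hq
    simp only [hR, mem_sdiff, mem_filter, compl_adj] at hp hq
    by_contra hpq
    exact hp.2 ⟨hp.1, q, hq, fun h => hq.2 (h ▸ hp.1), fun h => hpq h.symm⟩
  have hclique : G.IsClique ((T \ R) ∪ (A \ T) : Finset V) := by
    intro p hp q hq hpq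
    rcases mem_union.1 hp with hp | hp <;> rcases mem_union.1 hq with hq | hq
    · exact hT.isClique (mem_sdiff.1 hp).1 (mem_sdiff.1 hq).1 hpq
    · exact adj_of_mem p hp q hq
    · exact (adj_of_mem q hq p hp).symm
    · exact hA (mem_sdiff.1 hp).1 (mem_sdiff.1 hq).1 hpq
  have hlt := card_lt_of_isClique_of_cliqueFree hG hclique
  rw [card_union_of_disjoint (disjoint_sdiff.mono_left sdiff_subset)] at hlt
  have hRT : #(T \ R) + #R = #T := card_sdiff_add_card_eq_card (filter_subset _ _)
  have := hT.card_eq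
  omega

namespace IsKSaturated

theorem maximal_cliqueFree (hG : IsKSaturated k G) :
    Maximal (fun H : SimpleGraph V => H.CliqueFree k) G := by
  refine ⟨hG.1, fun H hH hGH u v huv => ?_⟩
  by_contra h
  refine hG.2 u v huv.ne h (hH.anti (sup_le hGH ?_))
  simp [huv]

theorem exists_isNClique_subset_commonNeighbors (hG : IsKSaturated (k + 2) G) {u v : V}
    (huv : Gᶜ.Adj u v) : ∃ C : Finset V, G.IsNClique k C ∧ ↑C ⊆ G.commonNeighbors u v := by
  classical
  obtain ⟨C, hu, hv, huC, hvC⟩ :=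
    exists_of_maximal_cliqueFree_not_adj hG.maximal_cliqueFree huv.1 huv.2
  refine ⟨C, by simpa [hu] using huC.erase_of_mem (mem_insert_self u C), fun x hx => ⟨?_, ?_⟩⟩
  · exact huC.isClique (by simp) (by simp [hx]) (ne_of_mem_of_not_mem hx hu).symm
  · exact hvC.isClique (by simp) (by simp [hx]) (ne_of_mem_of_not_mem hx hv).symm

end IsKSaturated

theorem exists_compl_adj_of_not_isUniversal {v : V} (hv : ¬ G.IsUniversal v) :
    ∃ w, Gᶜ.Adj v w := by
  simpa [IsUniversal] using hv

/-- A clique `C` together with an injection `f` sending every `c ∈ C` to a vertex not adjacent to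
`c`: a perfect matching, in the complement of `G`, from `C` into the other vertices. The values of
`f` outside `C` are irrelevant. -/
structure IsCliqueAntimatching (G : SimpleGraph V) (C : Finset V) (f : V → V) : Prop where
  isClique : G.IsClique C
  injOn : Set.InjOn f C
  compl_adj : ∀ c ∈ C, Gᶜ.Adj c (f c)

namespace IsCliqueAntimatching

variable {C : Finset V} {f : V → V}

theorem apply_notMem (h : IsCliqueAntimatching G C f) {c : V} (hc : c ∈ C) : f c ∉ C :=
  fun hfc => (h.compl_adj c hc).2 (h.isClique hc hfc (h.compl_adj c hc).1)

/-- The clique `K` misses a vertex of each pair `{c, f c}`. -/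
theorem card_add_card_le [DecidableEq V] (h : IsCliqueAntimatching G C f) {K M : Finset V}
    (hK : G.IsClique K) (hKM : K ⊆ M) : #K + #{c ∈ C | c ∈ M ∧ f c ∈ M} ≤ #M := by
  have hle : #{c ∈ C | c ∈ M ∧ f c ∈ M} ≤ #(M \ K) := by
    refine card_le_card_of_injOn (fun c => if c ∈ K then f c else c) (fun c hc => ?_) ?_
    · obtain ⟨hcC, hcM, hfcM⟩ := mem_filter.1 hc
      have hnot : c ∈ K → f c ∉ K := fun hcK hfcK =>
        (h.compl_adj c hcC).2 (hK hcK hfcK (h.compl_adj c hcC).1)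
      grind
    · intro c hc d hd hcd
      have hcC := (mem_filter.1 hc).1
      have hdC := (mem_filter.1 hd).1
      dsimp only at hcd
      split_ifs at hcd
      · exact h.injOn hcC hdC hcd
      · exact absurd (hcd ▸ hdC) (h.apply_notMem hcC)
      · exact absurd (hcd ▸ hcC) (h.apply_notMem hdC)
      · exact hcd
  have := card_sdiff_add_card_eq_card hKM
  omega

theorem card_le_card_filter_add_card_sdiff [DecidableEq V] (h : IsCliqueAntimatching G C f)
    {N : Finset V} (hfN : ∀ c ∈ C, f c ∈ N) (Q : Finset V) :
    #C ≤ #{c ∈ C | f c ∈ Q} + #(N \ Q) := by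
  rw [← card_filter_add_card_filter_not (s := C) (fun c => f c ∈ Q)]
  refine Nat.add_le_add_left (card_le_card_of_injOn f (fun c hc => ?_) ?_) _
  · obtain ⟨hcC, hcQ⟩ := mem_filter.1 hc
    exact mem_sdiff.2 ⟨hfN c hcC, hcQ⟩
  · exact h.injOn.mono (coe_subset.2 (filter_subset _ _))

end IsCliqueAntimatching

section NoUniversalVertex

variable [Fintype V] [DecidableRel G.Adj] {v : V}

theorem IsKSaturated.exists_isNClique_not_superset (hG : IsKSaturated (k + 2) G)
    (hU : ∀ v, ¬ G.IsUniversal v) {A : Finset V} (hA : A.Nonempty) (hAv : A ⊆ G.neighborFinset v) :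
    ∃ T, G.IsNClique (k + 1) T ∧ ¬ A ⊆ T ∧ ∀ w ∈ T, (∃ x ∈ A, Gᶜ.Adj x w) → G.Adj v w := by
  classical
  by_cases h : ∃ x ∈ A, ∃ y, Gᶜ.Adj v y ∧ ¬ G.Adj x y
  · obtain ⟨x, hxA, y, hvy, hxy⟩ := h
    obtain ⟨C, hC, hCvy⟩ := hG.exists_isNClique_subset_commonNeighbors hvy
    refine ⟨insert v C, hC.insert fun c hc => (hCvy hc).1, fun hAC => ?_, fun w hw hwA => ?_⟩
    · rcases mem_insert.1 (hAC hxA) with rfl | hxC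
      · simpa using hAv hxA
      · exact hxy (hCvy hxC).2.symm
    · rcases mem_insert.1 hw with rfl | hwC
      · obtain ⟨z, hzA, hzw⟩ := hwA
        exact absurd (by simpa using hAv hzA) fun h : G.Adj w z => hzw.2 h.symm
      · exact (hCvy hwC).1
  · push Not at h
    obtain ⟨x, hxA⟩ := hA
    obtain ⟨z, hxz⟩ := exists_compl_adj_of_not_isUniversal (hU x)
    obtain ⟨C, hC, hCxz⟩ := hG.exists_isNClique_subset_commonNeighbors hxz
    refine ⟨insert z C, hC.insert fun c hc => (hCxz hc).2, fun hAC => ?_, ?_⟩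
    · rcases mem_insert.1 (hAC hxA) with rfl | hxC
      · exact hxz.1 rfl
      · exact (hCxz hxC).1.ne rfl
    · rintro w - ⟨y, hyA, hyw⟩
      by_contra hvw
      have hvy : G.Adj v y := by simpa using hAv hyA
      exact hyw.2 (h y hyA w ⟨fun hvw' => hyw.2 (hvw' ▸ hvy.symm), hvw⟩)

/-- Induction on `A`: for `T` as in `IsKSaturated.exists_isNClique_not_superset`, the vertices of
`T` with a non-neighbour in `A \ T` are new compared with those obtained from `A ∩ T`, and by the
exchange argument there are at least `#(A \ T)` of them. -/
theorem IsKSaturated.card_le_card_biUnion_compl_neighborFinset [DecidableEq V]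
    (hG : IsKSaturated (k + 2) G) (hU : ∀ v, ¬ G.IsUniversal v) (A : Finset V) (hA : G.IsClique A)
    (hAv : A ⊆ G.neighborFinset v) :
    #A ≤ #(A.biUnion fun x => G.neighborFinset v ∩ Gᶜ.neighborFinset x) := by
  induction A using Finset.strongInduction with
  | H A ih =>
    rcases A.eq_empty_or_nonempty with rfl | hne
    · simp
    obtain ⟨T, hT, hAT, hTv⟩ := hG.exists_isNClique_not_superset hU hne hAv
    set R := {w ∈ T | ∃ x ∈ A \ T, Gᶜ.Adj x w}
    have hexchange : #(A \ T) ≤ #R := card_sdiff_le_card_filter_compl_adj hG.1 hA hT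
    have hinter := ih (A ∩ T) (by grind) (hA.subset (by simp)) (inter_subset_left.trans hAv)
    set B := (A ∩ T).biUnion fun x => G.neighborFinset v ∩ Gᶜ.neighborFinset x
    have hdisj : Disjoint B R := by
      rw [Finset.disjoint_left]
      intro w hwB hwR
      obtain ⟨x, hx, hxw⟩ := mem_biUnion.1 hwB
      have hxw : Gᶜ.Adj x w := by simpa using (mem_inter.1 hxw).2
      exact hxw.2 (hT.isClique (mem_inter.1 hx).2 (mem_filter.1 hwR).1 hxw.1)
    have hsub : B ∪ R ⊆ A.biUnion fun x => G.neighborFinset v ∩ Gᶜ.neighborFinset x := by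
      refine union_subset (biUnion_subset_biUnion_of_subset_left _ inter_subset_left) ?_
      intro w hw
      obtain ⟨hwT, x, hx, hxw⟩ := mem_filter.1 hw
      have hxA := (mem_sdiff.1 hx).1
      exact mem_biUnion.2 ⟨x, hxA, by simpa using ⟨hTv w hwT ⟨x, hxA, hxw⟩, hxw⟩⟩
    calc #A = #(A ∩ T) + #(A \ T) := (card_inter_add_card_sdiff A T).symm
      _ ≤ #B + #R := add_le_add hinter hexchange
      _ = #(B ∪ R) := (card_union_of_disjoint hdisj).symm
      _ ≤ _ := card_le_card hsub

theorem IsKSaturated.exists_isCliqueAntimatching (hG : IsKSaturated (k + 2) G)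
    (hU : ∀ v, ¬ G.IsUniversal v) (v : V) :
    ∃ C f, IsCliqueAntimatching G C f ∧ #C = k ∧ C ⊆ G.neighborFinset v ∧
      ∀ c ∈ C, f c ∈ G.neighborFinset v := by
  classical
  obtain ⟨y, hvy⟩ := exists_compl_adj_of_not_isUniversal (hU v)
  obtain ⟨C, hC, hCvy⟩ := hG.exists_isNClique_subset_commonNeighbors hvy
  have hCv : C ⊆ G.neighborFinset v := fun c hc => by simpa using (hCvy hc).1
  have hall (s : Finset C) :
      #s ≤ #(s.biUnion fun c => G.neighborFinset v ∩ Gᶜ.neighborFinset c) := by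
    have hs : s.map (.subtype _) ⊆ C := fun x hx => by
      obtain ⟨c, -, rfl⟩ := mem_map.1 hx
      exact c.2
    simpa [map_eq_image, image_biUnion, card_image_of_injective _ Subtype.val_injective] using
      hG.card_le_card_biUnion_compl_neighborFinset hU _ (hC.isClique.subset (coe_subset.2 hs))
      (hs.trans hCv)
  obtain ⟨f, hf, hfmem⟩ := (all_card_le_biUnion_card_iff_exists_injective _).1 hall
  have hfmem' (c : C) : f c ∈ G.neighborFinset v ∧ Gᶜ.Adj c (f c) := by simpa using hfmem c
  refine ⟨C, fun c => if hc : c ∈ C then f ⟨c, hc⟩ else c, ⟨hC.isClique, ?_, ?_⟩, hC.card_eq, hCv,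
    ?_⟩
  · intro c hc d hd hcd
    simp only [mem_coe.1 hc, mem_coe.1 hd, dif_pos] at hcd
    exact congrArg Subtype.val (hf hcd)
  · intro c hc
    simpa only [hc, dif_pos] using (hfmem' ⟨c, hc⟩).2
  · intro c hc
    simpa only [hc, dif_pos] using (hfmem' ⟨c, hc⟩).1

theorem IsKSaturated.two_mul_le_degree (hG : IsKSaturated (k + 2) G)
    (hU : ∀ v, ¬ G.IsUniversal v) (v : V) : 2 * k ≤ G.degree v := by
  classical
  obtain ⟨C, f, h, hCk, hCv, hfv⟩ := hG.exists_isCliqueAntimatching hU v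
  have hdisj : Disjoint C (C.image f) := by
    rw [Finset.disjoint_right]
    exact forall_mem_image.2 fun c hc => h.apply_notMem hc
  calc 2 * k = #(C ∪ C.image f) := by
        rw [card_union_of_disjoint hdisj, card_image_of_injOn h.injOn, hCk, two_mul]
    _ ≤ #(G.neighborFinset v) := card_le_card (union_subset hCv (image_subset_iff.2 hfv))
    _ = G.degree v := G.card_neighborFinset_eq_degree v

theorem sum_sum_degree_neighborFinset :
    ∑ v, ∑ w ∈ G.neighborFinset v, G.degree w = ∑ w, G.degree w ^ 2 := by
  rw [sum_comm' (t' := univ) (s' := fun w => G.neighborFinset w) (by simp [G.adj_comm])]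
  simp [sq]

section CliqueNeighborFinset

variable [DecidableEq V]

theorem sum_degree_eq_sum_card_neighborFinset_inter (Q : Finset V) :
    ∑ w ∈ Q, G.degree w = ∑ x, #(G.neighborFinset x ∩ Q) := by
  have h := sum_card_bipartiteAbove_eq_sum_card_bipartiteBelow (s := Q) (t := univ) G.Adj
  convert h using 3 with w _ x _
  · rw [← G.card_neighborFinset_eq_degree, G.neighborFinset_eq_filter]
    rfl
  · ext w
    simp [mem_bipartiteBelow, G.adj_comm, and_comm]

variable (G k v) in
/-- The vertices covered by the `k`-cliques in the neighbourhood of `v`. Such a clique is contained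
in the common neighbourhood of `v` and each vertex not adjacent to `v` in a `K_{k+2}`-saturated
graph. -/
def cliqueNeighborFinset : Finset V :=
  {K ∈ G.cliqueFinset k | K ⊆ G.neighborFinset v}.biUnion id

theorem mem_cliqueNeighborFinset {w : V} :
    w ∈ cliqueNeighborFinset G k v ↔ ∃ K, G.IsNClique k K ∧ K ⊆ G.neighborFinset v ∧ w ∈ K := by
  simp [cliqueNeighborFinset, and_assoc]

theorem cliqueNeighborFinset_subset : cliqueNeighborFinset G k v ⊆ G.neighborFinset v :=
  fun _ hw => let ⟨_, _, hKv, hwK⟩ := mem_cliqueNeighborFinset.1 hw; hKv hwK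

theorem subset_cliqueNeighborFinset {K : Finset V} (hK : G.IsNClique k K)
    (hKv : K ⊆ G.neighborFinset v) : K ⊆ cliqueNeighborFinset G k v :=
  fun _ hw => mem_cliqueNeighborFinset.2 ⟨K, hK, hKv, hw⟩

namespace IsCliqueAntimatching

variable {C : Finset V} {f : V → V}

/-- Applies `card_add_card_le` to a clique of size `k` if `x` is not adjacent to `v`, of size
`k - 1` if `x` lies in a `k`-clique of neighbours of `v`, and to the empty clique otherwise. -/
theorem add_card_le_card_neighborFinset_inter (h : IsCliqueAntimatching G C f)
    (hG : IsKSaturated (k + 2) G) {x : V} (hvx : v ≠ x) :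
    let Q := cliqueNeighborFinset G k v
    k + #{c ∈ C | c ∈ G.neighborFinset x ∩ Q ∧ f c ∈ G.neighborFinset x ∩ Q} ≤
      #(G.neighborFinset x ∩ Q) +
        ((if x ∈ G.neighborFinset v \ Q then k else 0) + if x ∈ Q then 1 else 0) := by
  intro Q
  by_cases hxQ : x ∈ Q
  · obtain ⟨K, hK, hKv, hxK⟩ := mem_cliqueNeighborFinset.1 hxQ
    have hKM : K.erase x ⊆ G.neighborFinset x ∩ Q := fun w hw => by
      obtain ⟨hwx, hwK⟩ := mem_erase.1 hw
      exact mem_inter.2 ⟨by simpa using hK.isClique hxK hwK hwx.symm,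
        subset_cliqueNeighborFinset hK hKv hwK⟩
    have hle := h.card_add_card_le (hK.isClique.subset (by simp)) hKM
    rw [card_erase_of_mem hxK, hK.card_eq] at hle
    simp only [hxQ, if_true]
    omega
  by_cases hxv : G.Adj v x
  · have hle := h.card_add_card_le (K := ∅) (by simp) (empty_subset (G.neighborFinset x ∩ Q))
    simp only [mem_sdiff, mem_neighborFinset, hxv, hxQ, not_false_eq_true, and_self, if_true,
      if_false]
    simp only [card_empty] at hle
    omega
  · obtain ⟨K, hK, hKvx⟩ := hG.exists_isNClique_subset_commonNeighbors ⟨hvx, hxv⟩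
    have hKQ : K ⊆ Q := subset_cliqueNeighborFinset hK fun w hw => by simpa using (hKvx hw).1
    have hle := h.card_add_card_le hK.isClique <|
      subset_inter (fun w hw => by simpa using (hKvx hw).2 : K ⊆ G.neighborFinset x) hKQ
    rw [hK.card_eq] at hle
    omega

theorem card_filter_mul_le_sum_card (h : IsCliqueAntimatching G C f)
    (hG : IsKSaturated (k + 2) G) {Q : Finset V} (hCQ : C ⊆ Q) (v : V) :
    #{c ∈ C | f c ∈ Q} * (k - 1) ≤ ∑ x ∈ univ.erase v,
      #{c ∈ C | c ∈ G.neighborFinset x ∩ Q ∧ f c ∈ G.neighborFinset x ∩ Q} := by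
  have hcount (c) (hc : c ∈ C) :
      k - 1 ≤ #{x ∈ univ.erase v | x ∈ G.commonNeighbors c (f c)} := by
    obtain ⟨D, hD, hDc⟩ := hG.exists_isNClique_subset_commonNeighbors (h.compl_adj c hc)
    calc k - 1 = #D - 1 := by rw [hD.card_eq]
      _ ≤ #(D.erase v) := pred_card_le_card_erase
      _ ≤ _ := card_le_card fun x hx => by
        simpa [(mem_erase.1 hx).1] using hDc (mem_erase.1 hx).2
  calc #{c ∈ C | f c ∈ Q} * (k - 1)
      ≤ ∑ c ∈ C with f c ∈ Q, #{x ∈ univ.erase v | x ∈ G.commonNeighbors c (f c)} := by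
        rw [← smul_eq_mul]
        exact card_nsmul_le_sum _ _ _ fun c hc => hcount c (mem_filter.1 hc).1
    _ = ∑ x ∈ univ.erase v, #{c ∈ {c ∈ C | f c ∈ Q} | x ∈ G.commonNeighbors c (f c)} :=
        sum_card_bipartiteAbove_eq_sum_card_bipartiteBelow _
    _ ≤ _ := sum_le_sum fun x _ => card_le_card fun c hc => by
        simp only [mem_filter, mem_commonNeighbors] at hc
        simp [hc, hCQ hc.1.1, hc.2.1.symm, hc.2.2.symm]

theorem card_sub_one_mul_add_le (h : IsCliqueAntimatching G C f) (hG : IsKSaturated (k + 2) G)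
    (hCQ : C ⊆ cliqueNeighborFinset G k v) :
    let Q := cliqueNeighborFinset G k v
    (Fintype.card V - 1) * k + #{c ∈ C | f c ∈ Q} * (k - 1) ≤
      ∑ w ∈ Q, G.degree w + #(G.neighborFinset v \ Q) * k := by
  intro Q
  have hvQ : G.neighborFinset v ∩ Q = Q := inter_eq_right.2 cliqueNeighborFinset_subset
  have hv : v ∉ G.neighborFinset v := by simp
  have hQ : Q ⊆ univ.erase v := fun x hx =>
    mem_erase.2 ⟨ne_of_mem_of_not_mem (cliqueNeighborFinset_subset hx) hv, mem_univ x⟩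
  have hN : G.neighborFinset v \ Q ⊆ univ.erase v := fun x hx =>
    mem_erase.2 ⟨ne_of_mem_of_not_mem (mem_sdiff.1 hx).1 hv, mem_univ x⟩
  have hsum : ∑ x ∈ univ.erase v,
        (k + #{c ∈ C | c ∈ G.neighborFinset x ∩ Q ∧ f c ∈ G.neighborFinset x ∩ Q}) ≤
      ∑ x ∈ univ.erase v, (#(G.neighborFinset x ∩ Q) +
        ((if x ∈ G.neighborFinset v \ Q then k else 0) + if x ∈ Q then 1 else 0)) :=
    sum_le_sum fun x hx => h.add_card_le_card_neighborFinset_inter hG (ne_of_mem_erase hx).symm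
  simp only [sum_add_distrib, sum_const, card_erase_of_mem (mem_univ v), card_univ, smul_eq_mul,
    sum_ite_mem, inter_eq_right.2 hN, inter_eq_right.2 hQ, mul_one] at hsum
  have hpairs := h.card_filter_mul_le_sum_card hG (Q := Q) hCQ v
  have hdeg : ∑ w ∈ Q, G.degree w = #Q + ∑ x ∈ univ.erase v, #(G.neighborFinset x ∩ Q) := by
    rw [sum_degree_eq_sum_card_neighborFinset_inter, ← add_sum_erase _ _ (mem_univ v), hvQ]
  omega

end IsCliqueAntimatching

end CliqueNeighborFinset

namespace IsKSaturated

variable (hG : IsKSaturated (k + 2) G) (hU : ∀ v, ¬ G.IsUniversal v)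

include hG hU

theorem le_sum_degree_neighborFinset (v : V) :
    k * (Fintype.card V - 1) + k * (k - 1) ≤ ∑ w ∈ G.neighborFinset v, G.degree w := by
  classical
  obtain ⟨C, f, h, rfl, hCv, hfv⟩ := hG.exists_isCliqueAntimatching hU v
  set k := #C
  set Q := cliqueNeighborFinset G k v
  set R := G.neighborFinset v \ Q
  have hQ : (Fintype.card V - 1) * k + #{c ∈ C | f c ∈ Q} * (k - 1) ≤
      ∑ w ∈ Q, G.degree w + #R * k :=
    h.card_sub_one_mul_add_le hG (subset_cliqueNeighborFinset ⟨h.isClique, rfl⟩ hCv)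
  have hR : #R * (2 * k) ≤ ∑ w ∈ R, G.degree w := by
    rw [← smul_eq_mul]
    exact card_nsmul_le_sum _ _ _ fun w _ => hG.two_mul_le_degree hU w
  have hC : k * (k - 1) ≤ #{c ∈ C | f c ∈ Q} * (k - 1) + #R * k :=
    calc k * (k - 1) ≤ (#{c ∈ C | f c ∈ Q} + #R) * (k - 1) := by
          gcongr
          exact h.card_le_card_filter_add_card_sdiff hfv Q
      _ ≤ _ := by
          rw [add_mul]
          gcongr
          exact Nat.sub_le k 1
  rw [← sum_sdiff cliqueNeighborFinset_subset]
  linarith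

theorem card_mul_two_mul_le_sum_degree :
    (Fintype.card V : ℤ) * (2 * k) ≤ ∑ v, (G.degree v : ℤ) := by
  rw [← card_univ, ← nsmul_eq_mul]
  exact card_nsmul_le_sum _ _ _ fun v _ => mod_cast hG.two_mul_le_degree hU v

theorem card_mul_le_sum_degree_sq :
    (Fintype.card V : ℤ) * (k * (Fintype.card V - 1) + k * (k - 1)) ≤
      ∑ v, (G.degree v : ℤ) ^ 2 := by
  have hlocal (v : V) : (k : ℤ) * (Fintype.card V - 1) + k * (k - 1) ≤
      ∑ w ∈ G.neighborFinset v, (G.degree w : ℤ) := by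
    have hV : 1 ≤ Fintype.card V := Fintype.card_pos_iff.2 ⟨v⟩
    have hv := hG.le_sum_degree_neighborFinset hU v
    rcases k with _ | k
    · simp only [Nat.cast_zero, zero_mul, add_zero]
      positivity
    · zify [hV] at hv
      simpa using hv
  calc (Fintype.card V : ℤ) * (k * (Fintype.card V - 1) + k * (k - 1))
      = ∑ _v : V, ((k : ℤ) * (Fintype.card V - 1) + k * (k - 1)) := by simp
    _ ≤ ∑ v, ∑ w ∈ G.neighborFinset v, (G.degree w : ℤ) := sum_le_sum fun v _ => hlocal v
    _ = ∑ v, (G.degree v : ℤ) ^ 2 := mod_cast sum_sum_degree_neighborFinset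

end IsKSaturated

end NoUniversalVertex

section UniversalVertices

theorem isClique_union_of_isUniversal {U K : Set V} (hU : ∀ u ∈ U, G.IsUniversal u)
    (hK : G.IsClique K) : G.IsClique (U ∪ K) := by
  rintro p (hp | hp) q (hq | hq) hpq
  · exact hU p hp hpq
  · exact hU p hp hpq
  · exact (hU q hq hpq.symm).symm
  · exact hK hp hq hpq

theorem not_isUniversal_induce_compl {U : Set V} (hU : ∀ u, u ∈ U ↔ G.IsUniversal u)
    (v : ↥Uᶜ) : ¬ (G.induce Uᶜ).IsUniversal v := by
  intro hv
  refine v.2 ((hU v).2 fun w hvw => ?_)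
  by_cases hw : w ∈ U
  · exact ((hU w).1 hw hvw.symm).symm
  · exact hv (w := ⟨w, hw⟩) fun h => hvw (congrArg Subtype.val h)

variable {U : Finset V}

theorem IsKSaturated.induce_compl (hU : ∀ u ∈ U, G.IsUniversal u)
    (hG : IsKSaturated (k + #U) G) : IsKSaturated k (G.induce (U : Set V)ᶜ) := by
  classical
  constructor
  · intro s hs
    have hs' := (isNClique_induce_iff _ _ _).1 hs
    have hdisj : Disjoint U (s.map (.subtype _)) := by
      rw [Finset.disjoint_right]
      exact forall_mem_map.2 fun x _ hx => x.2 (mem_coe.2 hx)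
    refine hG.1 (U ∪ s.map (.subtype _)) ⟨?_, ?_⟩
    · rw [coe_union]
      exact isClique_union_of_isUniversal hU hs'.isClique
    · rw [card_union_of_disjoint hdisj, hs'.card_eq, add_comm]
  · intro u v huv hadj hfree
    obtain ⟨s, hs⟩ := not_forall_not.1 (hG.2 u v (Subtype.coe_injective.ne huv) hadj)
    have hclique : (G.induce (U : Set V)ᶜ ⊔ fromEdgeSet {s(u, v)}).IsClique
        (s.subtype (· ∈ (U : Set V)ᶜ) : Finset ↥(U : Set V)ᶜ) := by
      intro p hp q hq hpq
      have := hs.isClique (mem_subtype.1 hp) (mem_subtype.1 hq) (Subtype.coe_injective.ne hpq)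
      simpa [Subtype.ext_iff] using this
    have hlt := card_lt_of_isClique_of_cliqueFree hfree hclique
    rw [card_subtype] at hlt
    have hcard : #(s \ U) = #{x ∈ s | x ∈ (U : Set V)ᶜ} := by congr 1; ext; simp
    have := le_card_sdiff U s
    have := hs.card_eq
    omega

variable [Fintype V] [DecidableEq V] [DecidableRel G.Adj]

theorem degree_eq_degree_induce_compl_add_card (hU : ∀ u ∈ U, G.IsUniversal u)
    (v : ↥(U : Set V)ᶜ) : G.degree v = (G.induce (U : Set V)ᶜ).degree v + #U := by
  have hUv : U ⊆ G.neighborFinset v := fun u hu => by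
    simpa using (hU u hu (ne_of_mem_of_not_mem (mem_coe.2 hu) v.2)).symm
  rw [← card_neighborFinset_eq_degree, ← card_neighborFinset_eq_degree,
    ← card_sdiff_add_card_eq_card hUv, ← card_map (.subtype _), map_neighborFinset_induce]
  congr 2
  ext
  simp

theorem sum_degree_sq_eq_of_isUniversal (hU : ∀ u ∈ U, G.IsUniversal u) :
    ∑ v, (G.degree v : ℤ) ^ 2 = #U * ((Fintype.card V : ℤ) - 1) ^ 2 +
      ∑ v, (((G.induce (U : Set V)ᶜ).degree v : ℤ) + #U) ^ 2 := by
  rw [← sum_add_sum_compl U]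
  congr 1
  · rw [← nsmul_eq_mul, ← sum_const]
    refine sum_congr rfl fun u hu => ?_
    rw [(G.degree_eq_card_sub_one u).2 (hU u hu), Nat.cast_pred (Fintype.card_pos_iff.2 ⟨u⟩)]
  · rw [sum_subtype (p := (· ∈ (U : Set V)ᶜ)) Uᶜ (by simp)]
    refine sum_congr rfl fun v _ => ?_
    rw [degree_eq_degree_induce_compl_add_card hU, Nat.cast_add]

end UniversalVertices

theorem card_add_one_lt_of_isUniversal [Fintype V] {U : Finset V} (hG : G.CliqueFree k)
    (hU : ∀ u ∈ U, G.IsUniversal u) (hk : k ≤ Fintype.card V) : #U + 1 < k := by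
  classical
  have hUK (K : Finset V) (hK : G.IsClique K) : #(U ∪ K) < k :=
    card_lt_of_isClique_of_cliqueFree hG (by
      rw [coe_union]
      exact isClique_union_of_isUniversal hU hK)
  obtain ⟨w, hw⟩ : ∃ w, w ∉ U := by
    by_contra! h
    exact (hUK ∅ (by simp)).not_ge (by simpa [eq_univ_of_forall h] using hk)
  simpa [card_union_of_disjoint, hw] using hUK {w} (by simp)

/-- `m`, `s` and `t` stand for the number of vertices, the sum of the degrees and the sum of the
squared degrees of the graph left after deleting `u` universal vertices; the left-hand side is the
value for `S_{n,r}` with `n = m + u` and `r - 1 = k + u`. -/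
theorem extremal_lt_of_le_sum {k u m s t : ℤ} (hk : 1 ≤ k) (hu : 0 ≤ u) (hku : 2 ≤ k + u)
    (hs : m * (2 * k) ≤ s) (ht : m * (k * (m - 1) + k * (k - 1)) ≤ t) :
    (m + u - 1) ^ 2 * (k + u) + (k + u) ^ 2 * (m - k) <
      u * (m + u - 1) ^ 2 + (t + 2 * u * s + m * u ^ 2) := by
  have hgap : 0 < k * (k ^ 2 + 2 * k * u + 2 * u - 1) := by
    have : 0 < k ^ 2 + 2 * k * u + 2 * u - 1 := by nlinarith [mul_nonneg (by omega : 0 ≤ k) hu]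
    positivity
  calc (m + u - 1) ^ 2 * (k + u) + (k + u) ^ 2 * (m - k)
      < (m + u - 1) ^ 2 * (k + u) + (k + u) ^ 2 * (m - k) +
          k * (k ^ 2 + 2 * k * u + 2 * u - 1) := lt_add_of_pos_right _ hgap
    _ = u * (m + u - 1) ^ 2 + (m * (k * (m - 1) + k * (k - 1)) + 2 * u * (m * (2 * k)) +
          m * u ^ 2) := by ring
    _ ≤ _ := by gcongr

theorem IsKSaturated.lt_sum_degree_sq [Fintype V] [DecidableRel G.Adj] {U : Finset V}
    (hG : IsKSaturated (k + 2 + #U) G) (hU : ∀ u, u ∈ U ↔ G.IsUniversal u) (hk : 1 ≤ k)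
    (hkU : 2 ≤ k + #U) :
    ((Fintype.card V : ℤ) - 1) ^ 2 * (k + #U) +
        ((k : ℤ) + #U) ^ 2 * (Fintype.card V - (k + #U)) <
      ∑ v, (G.degree v : ℤ) ^ 2 := by
  classical
  have hU' : ∀ u ∈ U, G.IsUniversal u := fun u => (hU u).1
  let H := G.induce (U : Set V)ᶜ
  have hHsat : IsKSaturated (k + 2) H := hG.induce_compl hU'
  have hHU : ∀ v, ¬ H.IsUniversal v := not_isUniversal_induce_compl hU
  have hcard : Fintype.card V = Fintype.card ↥(U : Set V)ᶜ + #U := by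
    rw [Fintype.card_compl_set, ← Set.toFinset_card, toFinset_coe,
      Nat.sub_add_cancel (card_le_univ U)]
  have hsum : ∑ v, (G.degree v : ℤ) ^ 2 = #U * ((Fintype.card V : ℤ) - 1) ^ 2 +
      (∑ v, (H.degree v : ℤ) ^ 2 + 2 * #U * ∑ v, (H.degree v : ℤ) +
        Fintype.card ↥(U : Set V)ᶜ * (#U : ℤ) ^ 2) := by
    rw [sum_degree_sq_eq_of_isUniversal hU']
    simp only [add_sq, sum_add_distrib, ← sum_mul, ← mul_sum, sum_const, card_univ, nsmul_eq_mul]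
    ring
  have hlt := extremal_lt_of_le_sum (u := #U) (mod_cast hk) (by positivity) (mod_cast hkU)
    (hHsat.card_mul_two_mul_le_sum_degree hHU) (hHsat.card_mul_le_sum_degree_sq hHU)
  rw [hsum, hcard]
  push_cast
  linarith

theorem exists_equiv_forall_mem_iff {α β : Type*} [Fintype α] [Fintype β] {s : Finset α}
    {t : Finset β} (h : Fintype.card α = Fintype.card β) (hst : #s = #t) :
    ∃ e : α ≃ β, ∀ a, e a ∈ t ↔ a ∈ s := by
  classical
  let e₀ := Fintype.equivOfCardEq h
  let e₁ : {b // b ∈ s.map e₀.toEmbedding} ≃ {b // b ∈ t} := Finset.equivOfCardEq (by simpa)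
  refine ⟨e₀.trans e₁.extendSubtype, fun a => ⟨fun ha => ?_, fun ha => ?_⟩⟩
  · by_contra has
    exact e₁.extendSubtype_not_mem (e₀ a) (by simpa using has) ha
  · exact e₁.extendSubtype_mem (e₀ a) (by simpa using ha)

theorem nonempty_iso_Snr [Fintype V] {n r : ℕ} {U : Finset V} (hn : Fintype.card V = n)
    (hr : #U = r - 1) (hU : ∀ u ∈ U, G.IsUniversal u) (hU' : G.induce (U : Set V)ᶜ = ⊥) :
    Nonempty (G ≃g Snr n r) := by
  have hle : r - 1 ≤ n := hr ▸ hn ▸ card_le_univ U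
  obtain ⟨e, he⟩ := exists_equiv_forall_mem_iff (s := U) (t := {i : Fin n | i.1 < r - 1})
    (by simpa using hn) (by rw [Fin.card_filter_val_lt, hr, min_eq_right hle])
  have hadj (u v : V) : G.Adj u v ↔ u ≠ v ∧ (u ∈ U ∨ v ∈ U) := by
    refine ⟨fun huv => ⟨huv.ne, ?_⟩, ?_⟩
    · by_contra! hnot
      have : (G.induce (U : Set V)ᶜ).Adj ⟨u, hnot.1⟩ ⟨v, hnot.2⟩ := huv
      simp [hU'] at this
    · rintro ⟨huv, hu | hv⟩
      · exact hU u hu huv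
      · exact (hU v hv huv.symm).symm
  refine ⟨⟨e, fun {u v} => ?_⟩⟩
  simp only [mem_filter, mem_univ, true_and] at he
  simp only [Snr, fromRel_adj, he, hadj, ne_eq, EmbeddingLike.apply_eq_iff_eq]
  tauto

end

theorem stmt_1_general {V : Type*} [Fintype V] {r n : ℕ} (hr : 3 ≤ r) (hn : r + 1 ≤ n)
    (hcard : Fintype.card V = n) {G : SimpleGraph V} [DecidableRel G.Adj]
    (hsat : IsKSaturated (r + 1) G)
    (hle : ∑ v : V, (G.degree v : ℤ) ^ 2
      ≤ ((n : ℤ) - 1) ^ 2 * ((r : ℤ) - 1) + ((r : ℤ) - 1) ^ 2 * ((n : ℤ) - (r : ℤ) + 1)) :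
    Nonempty (G ≃g Snr n r) := by
  classical
  let U : Finset V := {u | G.IsUniversal u}
  have hU (u : V) : u ∈ U ↔ G.IsUniversal u := by simp [U]
  have hUr : U.card + 1 < r + 1 :=
    card_add_one_lt_of_isUniversal hsat.1 (fun u => (hU u).1) (by omega)
  obtain ⟨k, rfl⟩ : ∃ k, r = k + 1 + U.card := ⟨r - 1 - U.card, by omega⟩
  have hsat' : IsKSaturated (k + 2 + U.card) G := by convert hsat using 1; omega
  rcases Nat.eq_zero_or_pos k with rfl | hk
  · have hH := (hsat'.induce_compl fun u => (hU u).1).1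
    exact nonempty_iso_Snr hcard (by omega) (fun u => (hU u).1) (cliqueFree_two.1 hH)
  · refine absurd hle (not_le.2 ?_)
    have hlt := hsat'.lt_sum_degree_sq hU hk (by omega)
    rw [hcard] at hlt
    push_cast
    linarith

theorem stmt_1 {V : Type*} [Fintype V] [DecidableEq V] (r n : ℕ) (hr : 3 ≤ r)
    (hn : r + 1 ≤ n) (hcard : Fintype.card V = n)
    (G : SimpleGraph V) [DecidableRel G.Adj] (hsat : IsKSaturated (r + 1) G)
    (heq : ∑ v : V, (G.degree v : ℤ) ^ 2
      = ((n : ℤ) - 1) ^ 2 * ((r : ℤ) - 1) + ((r : ℤ) - 1) ^ 2 * ((n : ℤ) - (r : ℤ) + 1)) :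
    Nonempty (G ≃g Snr n r) := by
  exact stmt_1_general hr hn hcard hsat heq.le
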